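/- Let c₁, c₂, c₃, c₄ ∈ ℂ be such that c₁, c₂, c₃, c₄, c₄−c₁, c₄−c₁−c₃, and c₄−c₁−c₂−c₃ are all not integers. Then there exists ε > 0 such that for all z₁, z₅ ∈ ℂ with |z₁| < ε and |z₅| < ε, all series occurring below converge absolutely and [c₁/(c₄(c₁−c₄))]·F₁(c₄,c₂,c₃;1+c₄−c₁;z₁z₅,z₁)·F₁(−c₄,−c₂,−c₃;1−c₄+c₁;z₁z₅,z₁) + [c₃/((c₁+c₃−c₄)(c₄−c₁))]·G₂(c₁,c₂,c₄−c₁,c₁+c₃−c₄;−z₁,−z₅)·G₂(−c₁,−c₂,c₁−c₄,c₄−c₁−c₃;−z₁,−z₅) + [c₂/((c₁+c₂+c₃−c₄)(c₄−c₁−c₃))]·F₁(c₁+c₂+c₃−c₄,c₁,c₃;1+c₁+c₃−c₄;z₁z₅,z₅)·F₁(c₄−c₁−c₂−c₃,−c₁,−c₃;1+c₄−c₁−c₃;z₁z₅,z₅) = (c₁+c₂+c₃)/(c₄(c₁+c₂+c₃−c₄)). -/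

import Mathlib

/-!
Put `d = c₄ - c₁`. Each product is a power series in `z₁, z₅`, and the relation is proved coefficient
by coefficient: at `z₁ ^ M * z₅ ^ N` the three coefficients have to add up to `0` unless
`M = N = 0`.

A coefficient of a product is a double sum of terms consisting of two kinds of factors. The factors
`(c)_i (-c)_j / (i! j!)` are the weights `resW c (i, j)`. The remaining ones pair up as
`(c + d)_a (-c - d)_b / ((1 + d)_a (1 - d)_b)` with `a + b = p` fixed (for Horn's series after
reflecting two of the symbols), and by `pochZ_pair` such a quotient is `d (c + d)` times the value at
`d + a` of a rational function `ratG c p` which depends only on `p`. For `p ≥ 1` the partial fraction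
decomposition of `c * ratG c p` has exactly the weights `resW c` as residues (`sum_resW_div`).

For `M > N` the third product does not contribute. Expanding `ratG` in the other two gives, up to
sign, the same triple sum of `resW c₁ q * resW c₂ r * resW c₃ t / (d + r + t - q)`, so they cancel
(`coef_off_diag`). The case `M < N` is the same under `c₁ ↔ c₂`, `d ↔ c₃ - d`. For `M = N ≥ 1` all
three contribute, and the cancellation comes from
`c₃ / (x (c₃ + x)) = 1 / x - 1 / (c₃ + x)` (`coef_diag`). For `M = N = 0` the three prefactors add up
to the right-hand side.

Convergence near `0` holds because all coefficient families grow at most geometrically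
(`GeomBdd`): a parameter that is not an integer has positive distance to `ℤ`, which bounds the
reciprocal Pochhammer symbols.
-/

/-- The rising factorial (Pochhammer symbol) `(a)ₙ` for a natural number `n`. -/
noncomputable def pochN (a : ℂ) (m : ℕ) : ℂ := (ascPochhammer ℂ m).eval a

/-- The shifted Pochhammer symbol `(a)ₛ = Γ(a+s)/Γ(a)` for an integer shift `s`. -/
noncomputable def pochZ (a : ℂ) (s : ℤ) : ℂ := Complex.Gamma (a + s) / Complex.Gamma a

/-- The `(m, n)`-th term of Appell's first hypergeometric series `F₁(a,b,b′;c;x,y)`. -/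
noncomputable def appellF1Term (a b b' c x y : ℂ) (p : ℕ × ℕ) : ℂ :=
  pochN a (p.1 + p.2) * pochN b p.1 * pochN b' p.2 /
    (pochN c (p.1 + p.2) * (p.1.factorial : ℂ) * (p.2.factorial : ℂ)) * x ^ p.1 * y ^ p.2

/-- Appell's first hypergeometric series `F₁(a,b,b′;c;x,y)`. -/
noncomputable def appellF1 (a b b' c x y : ℂ) : ℂ := ∑' p : ℕ × ℕ, appellF1Term a b b' c x y p

/-- The `(m, n)`-th term of Horn's hypergeometric series `G₂(a,a′,b,b′;x,y)`. -/
noncomputable def hornG2Term (a a' b b' x y : ℂ) (p : ℕ × ℕ) : ℂ :=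
  pochN a p.1 * pochN a' p.2 * pochZ b ((p.2 : ℤ) - (p.1 : ℤ)) *
    pochZ b' ((p.1 : ℤ) - (p.2 : ℤ)) / ((p.1.factorial : ℂ) * (p.2.factorial : ℂ)) *
    x ^ p.1 * y ^ p.2

/-- Horn's hypergeometric series `G₂(a,a′,b,b′;x,y)`. -/
noncomputable def hornG2 (a a' b b' x y : ℂ) : ℂ := ∑' p : ℕ × ℕ, hornG2Term a a' b b' x y p

open Finset

/-! ### Pochhammer symbols -/

/-- `x` is not an integer. -/
def NonInt (x : ℂ) : Prop := ∀ m : ℤ, x ≠ (m : ℂ)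

lemma NonInt.neg {x : ℂ} (h : NonInt x) : NonInt (-x) := fun m hm =>
  h (-m) (by push_cast; linear_combination -hm)

lemma NonInt.add_int {x : ℂ} (h : NonInt x) (k : ℤ) : NonInt (x + k) := fun m hm =>
  h (m - k) (by push_cast; linear_combination hm)

lemma NonInt.one_add {x : ℂ} (h : NonInt x) : NonInt (1 + x) := fun m hm =>
  h (m - 1) (by push_cast; linear_combination hm)

lemma NonInt.one_sub {x : ℂ} (h : NonInt x) : NonInt (1 - x) := by
  simpa [sub_eq_add_neg] using h.neg.one_add

lemma NonInt.ne_zero {x : ℂ} (h : NonInt x) : x ≠ 0 := by simpa using h 0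

lemma NonInt.add_int_ne_zero {x : ℂ} (h : NonInt x) (k : ℤ) : x + k ≠ 0 := (h.add_int k).ne_zero

lemma NonInt.gamma_ne_zero {x : ℂ} (h : NonInt x) : Complex.Gamma x ≠ 0 :=
  Complex.Gamma_ne_zero fun m hm => h (-m) (by simpa using hm)

lemma pochN_zero (a : ℂ) : pochN a 0 = 1 := by simp [pochN]

lemma pochN_succ (a : ℂ) (n : ℕ) : pochN a (n + 1) = pochN a n * (a + n) :=
  ascPochhammer_succ_eval n a

lemma pochN_succ_left (a : ℂ) (n : ℕ) : pochN a (n + 1) = a * pochN (a + 1) n := by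
  simp [pochN, ascPochhammer_succ_left]

lemma pochN_ne_zero {a : ℂ} (h : NonInt a) (n : ℕ) : pochN a n ≠ 0 := by
  induction n with
  | zero => simp [pochN_zero]
  | succ n ih => rw [pochN_succ]; exact mul_ne_zero ih (by simpa using h.add_int_ne_zero n)

lemma pochZ_ne_zero {x : ℂ} (h : NonInt x) (s : ℤ) : pochZ x s ≠ 0 :=
  div_ne_zero (h.add_int s).gamma_ne_zero h.gamma_ne_zero

lemma pochZ_natCast {x : ℂ} (h : NonInt x) (n : ℕ) : pochZ x n = pochN x n := by
  have := Complex.Gamma_add_nat_div_Gamma_eq (n := n) x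
    (fun k hk => h (-k) (by simpa using hk))
  simpa [pochZ, pochN] using this

lemma pochZ_zero {x : ℂ} (h : NonInt x) : pochZ x 0 = 1 := by
  simp [pochZ, h.gamma_ne_zero]

lemma pochZ_add {x : ℂ} (h : NonInt x) (s t : ℤ) :
    pochZ x (s + t) = pochZ x s * pochZ (x + s) t := by
  have := (h.add_int s).gamma_ne_zero
  unfold pochZ
  push_cast
  rw [← add_assoc]
  field_simp

lemma pochZ_add_one {x : ℂ} (h : NonInt x) (s : ℤ) :
    pochZ x (s + 1) = pochZ x s * (x + s) := by
  rw [pochZ_add h, show (1 : ℤ) = ((1 : ℕ) : ℤ) by simp, pochZ_natCast (h.add_int s)]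
  simp [pochN]

lemma pochZ_one_add {x : ℂ} (h : NonInt x) (s : ℤ) :
    x * pochZ (1 + x) s = pochZ x s * (x + s) := by
  have e := pochZ_add h 1 s
  have e1 := pochZ_add_one h 0
  have e2 := pochZ_add_one h s
  rw [zero_add] at e1
  rw [add_comm 1 s, e1, pochZ_zero h] at e
  push_cast at e
  rw [add_comm 1 x, ← e2, e]
  ring

/-- Reflection formula for the shifted Pochhammer symbol. -/
lemma pochZ_reflect {x : ℂ} (h : NonInt x) (s : ℤ) :
    pochZ x (-s) * pochZ (1 - x) s = (-1) ^ s := by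
  have key : ∀ s : ℤ, pochZ x (-(s + 1)) * pochZ (1 - x) (s + 1)
      = -(pochZ x (-s) * pochZ (1 - x) s) := by
    intro s
    have e := pochZ_add_one h (-(s + 1))
    rw [show -(s + 1) + 1 = -s by ring] at e
    rw [pochZ_add_one h.one_sub, e]
    push_cast
    ring
  induction s using Int.induction_on with
  | zero => simp [pochZ_zero h, pochZ_zero h.one_sub]
  | succ i ih => rw [key, ih, zpow_add₀ (by norm_num)]; simp
  | pred i ih =>
    have := key (-(i : ℤ) - 1)
    rw [sub_add_cancel, ih] at this
    rw [← neg_neg (pochZ x _ * _), ← this, zpow_sub₀ (by norm_num), zpow_one, div_neg, div_one]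

/-! ### The rational function `ratG` and its partial fractions -/

/-- The value at `x` of the rational function
`(c+x-1)(c+x-2)⋯(c+x-M+1) / (x(x-1)⋯(x-M))`, read as `1/(x(c+x))` for `M = 0`. -/
noncomputable def ratG (c : ℂ) (M : ℕ) (x : ℂ) : ℂ :=
  pochN (-c - x) M / (pochN (1 - x) M * (x * (c + x)))

/-- The product of the `i`-th Taylor coefficient of `(1-z)^(-c)` and the `j`-th one of
`(1-z)^c`, where `q = (i, j)`. For `q` on the `M`-th antidiagonal, `M ≥ 1`, this is `c` times the residue
of `ratG c M` at `i`. -/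
noncomputable def resW (c : ℂ) (q : ℕ × ℕ) : ℂ :=
  pochN c q.1 * pochN (-c) q.2 / ((q.1.factorial : ℂ) * (q.2.factorial : ℂ))

/-- For fixed `a + b = p`, this quotient of Pochhammer symbols depends on `a` only through the point
`d + a` at which a fixed rational function is evaluated. -/
lemma pochZ_pair {c d : ℂ} (hd : NonInt d) (hcd : NonInt (c + d)) {p : ℕ} {a b : ℤ}
    (hab : a + b = p) :
    pochZ (c + d) a * pochZ (-c - d) b / (pochZ (1 + d) a * pochZ (1 - d) b)
      = d * (c + d) * ratG c p (d + a) := by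
  obtain rfl : b = -a + p := by linarith
  have hcd' : NonInt (-c - d) := by simpa [sub_eq_add_neg, add_comm] using hcd.neg
  rw [pochZ_add hcd', pochZ_add hd.one_sub, pochZ_natCast (hcd'.add_int _),
    pochZ_natCast (hd.one_sub.add_int _)]
  have r1 := pochZ_reflect hcd' a
  have r2 := pochZ_reflect hd.one_sub a
  rw [show 1 - (-c - d) = 1 + (c + d) by ring] at r1
  rw [show 1 - (1 - d) = d by ring] at r2
  have s1 := pochZ_one_add hcd a
  have s2 := pochZ_one_add hd a
  have n1 := hd.add_int_ne_zero a
  have n2 := hcd.add_int_ne_zero a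
  have n3 := pochZ_ne_zero hd.one_add a
  have n4 := pochZ_ne_zero hd.one_sub (-a)
  have n5 := pochN_ne_zero (hd.one_sub.add_int (-a)) p
  have n6 := pochZ_ne_zero hd a
  have n7 := pochZ_ne_zero hcd.one_add a
  have n8 := hd.ne_zero
  have n9 := hcd.ne_zero
  unfold ratG
  rw [show -c - (d + (a : ℂ)) = -c - d + ((-a : ℤ) : ℂ) by push_cast; ring,
    show 1 - (d + (a : ℂ)) = 1 - d + ((-a : ℤ) : ℂ) by push_cast; ring,
    show c + (d + (a : ℂ)) = c + d + a by ring]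
  rw [← mul_div_assoc, div_eq_div_iff (mul_ne_zero n3 (mul_ne_zero n4 n5))
    (mul_ne_zero n5 (mul_ne_zero n1 n2))]
  have key : pochZ (c + d) a * pochZ (-c - d) (-a) * ((d + a) * (c + d + a))
      = d * (c + d) * (pochZ (1 + d) a * pochZ (1 - d) (-a)) := by
    linear_combination (-(d + a) * pochZ (-c - d) (-a)) * s1 + (d + a) * (c + d) * r1
      - (c + d) * pochZ (1 - d) (-a) * s2 - (c + d) * (d + a) * r2
  linear_combination (pochN (-c - d + ((-a : ℤ) : ℂ)) p * pochN (1 - d + ((-a : ℤ) : ℂ)) p) * key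

/-- The reciprocal of the Lagrange nodal weight at the node `i` among `0, …, i + k`. -/
lemma prod_erase_node (i k : ℕ) :
    ∏ j ∈ (range (i + 1 + k)).erase i, ((i : ℂ) - j) = i.factorial * ((-1) ^ k * k.factorial) := by
  induction k with
  | zero =>
    rw [add_zero, range_add_one, erase_insert (by simp)]
    simp only [Nat.factorial_zero, pow_zero, Nat.cast_one, mul_one]
    rw [← Finset.prod_range_reflect, ← Finset.prod_range_add_one_eq_factorial]
    push_cast
    refine prod_congr rfl fun j hj => ?_
    have : j + 1 ≤ i := by simpa using hj
    rw [show i - 1 - j = i - (j + 1) by omega, Nat.cast_sub this]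
    push_cast; ring
  | succ k ih =>
    rw [← add_assoc, range_add_one, erase_insert_of_ne (by omega), prod_insert (by simp), ih,
      Nat.factorial_succ]
    push_cast; ring

lemma pochN_neg_mul (c : ℂ) (i k : ℕ) (h : 1 ≤ i + k) :
    pochN c i * pochN (-c) k = (-1) ^ k * c * pochN (c - k + 1) (i + k - 1) := by
  induction k with
  | zero =>
    obtain ⟨n, rfl⟩ : ∃ n, i = n + 1 := ⟨i - 1, by omega⟩
    simp [pochN_zero, pochN_succ_left]
  | succ k ih =>
    by_cases hk : 1 ≤ i + k
    · obtain ⟨n, hn⟩ : ∃ n, i + k = n + 1 := ⟨i + k - 1, by omega⟩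
      have ih := ih hk
      rw [hn, Nat.add_sub_cancel] at ih
      rw [← add_assoc, hn, Nat.add_sub_cancel, pochN_succ, ← mul_assoc, ih, pochN_succ_left,
        pow_succ]
      push_cast
      rw [show c - (k + 1) + 1 + 1 = c - (k : ℂ) + 1 by ring]
      ring
    · obtain ⟨rfl, rfl⟩ : i = 0 ∧ k = 0 := by omega
      simp [pochN_zero, pochN_succ]

lemma pochN_neg_eq_prod (x : ℂ) (n : ℕ) :
    pochN (-x) n = (-1) ^ n * ∏ l ∈ range n, (x - l) := by
  induction n with
  | zero => simp [pochN_zero]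
  | succ n ih => rw [pochN_succ, ih, prod_range_succ, pow_succ]; ring

/-- Partial fraction decomposition of `c * ratG c M` for `M ≥ 1`: Lagrange interpolation of its
numerator `P`, of degree `M - 1`, at the nodes `0, …, M`. -/
lemma sum_resW_div {c x : ℂ} (hx : NonInt x) (hcx : c + x ≠ 0) {M : ℕ} (hM : 1 ≤ M) :
    ∑ q ∈ antidiagonal M, resW c q / (x - q.1) = c * ratG c M x := by
  set P : Polynomial ℂ := (ascPochhammer ℂ (M - 1)).comp
    (Polynomial.X + Polynomial.C (c - M + 1)) with hP
  have hPe : ∀ y, P.eval y = pochN (c + y - M + 1) (M - 1) := by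
    intro y
    simp only [hP, pochN, Polynomial.eval_comp, Polynomial.eval_add, Polynomial.eval_X,
      Polynomial.eval_C]
    ring_nf
  have hinj : Set.InjOn (fun i : ℕ => (i : ℂ)) (range (M + 1)) := Nat.cast_injective.injOn
  have hdeg : P.degree < (range (M + 1)).card := by
    refine Polynomial.degree_le_natDegree.trans_lt ?_
    rw [hP, Polynomial.natDegree_comp, ascPochhammer_natDegree, Polynomial.natDegree_X_add_C]
    rw [card_range]
    exact_mod_cast (by omega : (M - 1) * 1 < M + 1)
  have h1 := Lagrange.eq_interpolate hinj hdeg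
  have h2 := Lagrange.eval_interpolate_not_at_node (s := range (M + 1))
    (v := fun i : ℕ => (i : ℂ)) (fun i => P.eval (i : ℂ)) (x := x)
    (fun i _ => by simpa using hx i)
  rw [← h1, Lagrange.eval_nodal] at h2
  have h3 : ∑ q ∈ antidiagonal M, resW c q / (x - q.1) = c * ∑ i ∈ range (M + 1),
      Lagrange.nodalWeight (range (M + 1)) (fun i : ℕ => (i : ℂ)) i * (x - i)⁻¹ *
        P.eval (i : ℂ) := by
    rw [Nat.sum_antidiagonal_eq_sum_range_succ_mk, mul_sum]
    refine sum_congr rfl fun i hi => ?_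
    obtain ⟨k, rfl⟩ : ∃ k, M = i + k := ⟨M - i, by simp at hi; omega⟩
    have e1 : Lagrange.nodalWeight (range (i + k + 1)) (fun i : ℕ => (i : ℂ)) i
        = ((i.factorial : ℂ) * ((-1) ^ k * k.factorial))⁻¹ := by
      rw [Lagrange.nodalWeight, prod_inv_distrib, ← prod_erase_node, Nat.add_right_comm]
    have e2 := pochN_neg_mul c i k hM
    have e3 : ((-1 : ℂ) ^ k) * (-1) ^ k = 1 := by rw [← mul_pow]; simp
    have e4 : x - (i : ℂ) ≠ 0 := sub_ne_zero.2 (by simpa using hx i)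
    have f1 : (i.factorial : ℂ) ≠ 0 := by exact_mod_cast i.factorial_ne_zero
    have f2 : (k.factorial : ℂ) ≠ 0 := by exact_mod_cast k.factorial_ne_zero
    have e5 : (-1 : ℂ) ^ k ≠ 0 := by simp
    simp only [resW, Nat.add_sub_cancel_left]
    rw [e1, e2, hPe]
    push_cast
    rw [show c + (i : ℂ) - (i + k) + 1 = c - k + 1 by ring]
    field_simp
    linear_combination (c * pochN (c - (k : ℂ) + 1) (i + k - 1)) * e3
  have e6 := pochN_neg_mul (c + x) 0 M (by omega)
  have e7 := pochN_neg_eq_prod x (M + 1)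
  rw [pochN_zero, one_mul, zero_add] at e6
  rw [pochN_succ_left] at e7
  have n1 : ∏ l ∈ range (M + 1), (x - (l : ℂ)) ≠ 0 :=
    prod_ne_zero_iff.2 fun i _ => sub_ne_zero.2 (by simpa using hx i)
  have n2 := pochN_ne_zero hx.one_sub M
  have n3 := hx.ne_zero
  rw [h3]
  congr 1
  rw [hPe, show c + x - (M : ℂ) + 1 = c + x - M + 1 by ring] at h2
  rw [ratG, eq_div_iff (by positivity), show -c - x = -(c + x) by ring, e6, h2]
  rw [show -x + 1 = 1 - x by ring, pow_succ] at e7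
  linear_combination (-(∑ i ∈ range (M + 1),
    Lagrange.nodalWeight (range (M + 1)) (fun i : ℕ => (i : ℂ)) i * (x - i)⁻¹ *
        P.eval (i : ℂ)) * (c + x)) * e7

/-! ### Coefficient identities -/

/-- Cauchy product of two doubly indexed coefficient families. -/
noncomputable def cauchy (f g : ℕ × ℕ → ℂ) (p : ℕ × ℕ) : ℂ :=
  ∑ r ∈ antidiagonal p.1, ∑ t ∈ antidiagonal p.2, f (r.1, t.1) * g (r.2, t.2)

/-- Taylor coefficients of `F₁(c₁+d,c₂,c₃;1+d) · F₁(-c₁-d,-c₂,-c₃;1-d)`. -/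
noncomputable def coefF (c₁ c₂ c₃ d : ℂ) : ℕ × ℕ → ℂ :=
  cauchy (appellF1Term (c₁ + d) c₂ c₃ (1 + d) 1 1)
    (appellF1Term (-c₁ - d) (-c₂) (-c₃) (1 - d) 1 1)

/-- Taylor coefficients of `G₂(c₁,c₂,d,c₃-d) · G₂(-c₁,-c₂,-d,d-c₃)`, both taken at `(-x,-y)`. -/
noncomputable def coefH (c₁ c₂ c₃ d : ℂ) : ℕ × ℕ → ℂ :=
  cauchy (hornG2Term c₁ c₂ d (c₃ - d) (-1) (-1)) (hornG2Term (-c₁) (-c₂) (-d) (d - c₃) (-1) (-1))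

lemma hornG2Term_swap (a a' b b' x y : ℂ) (i j : ℕ) :
    hornG2Term a a' b b' x y (i, j) = hornG2Term a' a b' b y x (j, i) := by
  simp only [hornG2Term]; ring

lemma coefH_swap (c₁ c₂ c₃ d : ℂ) (M N : ℕ) :
    coefH c₁ c₂ c₃ d (M, N) = coefH c₂ c₁ c₃ (c₃ - d) (N, M) := by
  simp only [coefH, cauchy]
  rw [sum_comm]
  refine sum_congr rfl fun t _ => sum_congr rfl fun r _ => ?_
  rw [hornG2Term_swap, hornG2Term_swap (-c₁)]
  congr 2 <;> ring

lemma coefF_eq {c₁ c₂ c₃ d : ℂ} (hd : NonInt d) (hcd : NonInt (c₁ + d)) (m n : ℕ) :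
    coefF c₁ c₂ c₃ d (m, n) = ∑ r ∈ antidiagonal m, ∑ t ∈ antidiagonal n,
      resW c₂ r * resW c₃ t * (d * (c₁ + d) * ratG c₁ (m + n) (d + (r.1 + t.1))) := by
  simp only [coefF, cauchy]
  refine sum_congr rfl fun r hr => sum_congr rfl fun t ht => ?_
  rw [HasAntidiagonal.mem_antidiagonal] at hr ht
  have hcd' : NonInt (-c₁ - d) := by simpa [sub_eq_add_neg, add_comm] using hcd.neg
  have key := pochZ_pair hd hcd (p := m + n) (a := ((r.1 + t.1 : ℕ) : ℤ))
    (b := ((r.2 + t.2 : ℕ) : ℤ)) (by norm_cast; omega)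
  rw [pochZ_natCast hcd, pochZ_natCast hcd', pochZ_natCast hd.one_add,
    pochZ_natCast hd.one_sub] at key
  push_cast at key
  rw [← key]
  simp only [appellF1Term, resW, one_pow, mul_one]
  simp only [div_eq_mul_inv, mul_inv]
  ring

lemma coefH_eq {c₁ c₂ c₃ d : ℂ} (hd : NonInt d) (hcd : NonInt (c₃ - d)) (m n : ℕ) :
    coefH c₁ c₂ c₃ d (m + n, m) = ∑ q ∈ antidiagonal (m + n), ∑ r ∈ antidiagonal m,
      resW c₁ q * resW c₂ r * (-d * (c₃ - d) * ratG c₃ n (-d + (q.1 - r.1))) := by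
  simp only [coefH, cauchy]
  refine sum_congr rfl fun q hq => sum_congr rfl fun r hr => ?_
  rw [HasAntidiagonal.mem_antidiagonal] at hq hr
  have hcd' : NonInt (d - c₃) := by simpa using hcd.neg
  have key := pochZ_pair (c := c₃) (d := -d) (p := n) (a := (q.1 : ℤ) - r.1)
    (b := (q.2 : ℤ) - r.2) hd.neg (by simpa [sub_eq_add_neg] using hcd) (by omega)
  rw [show c₃ + -d = c₃ - d by ring, show -c₃ - -d = d - c₃ by ring,
    show 1 + -d = 1 - d by ring, show 1 - -d = 1 + d by ring] at key
  have r1 := pochZ_reflect hd ((q.1 : ℤ) - r.1)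
  have r2 := pochZ_reflect hd.neg ((q.2 : ℤ) - r.2)
  rw [neg_sub] at r1 r2
  rw [sub_neg_eq_add] at r2
  have n1 := pochZ_ne_zero hd.one_sub ((q.1 : ℤ) - r.1)
  have n2 := pochZ_ne_zero hd.one_add ((q.2 : ℤ) - r.2)
  have sgn : ((-1 : ℂ)) ^ ((q.1 : ℤ) - r.1) * (-1) ^ ((q.2 : ℤ) - r.2)
      * ((-1) ^ q.1 * (-1) ^ r.1 * ((-1) ^ q.2 * (-1) ^ r.2)) = 1 := by
    rw [← zpow_add₀ (by norm_num), ← pow_add, ← pow_add, ← pow_add, ← zpow_natCast,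
      ← zpow_add₀ (by norm_num)]
    refine Even.neg_one_zpow ⟨(q.1 : ℤ) + q.2, ?_⟩
    push_cast; ring
  push_cast at key
  rw [← key]
  rw [← eq_div_iff n1] at r1
  rw [← eq_div_iff n2] at r2
  simp only [hornG2Term, resW]
  rw [r1, r2]
  simp only [div_eq_mul_inv, mul_inv]
  linear_combination (pochN c₁ q.1 * pochN (-c₁) q.2 * ((q.1.factorial : ℂ)⁻¹ * (q.2.factorial : ℂ)⁻¹) *
    (pochN c₂ r.1 * pochN (-c₂) r.2 * ((r.1.factorial : ℂ)⁻¹ * (r.2.factorial : ℂ)⁻¹)) *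
    (pochZ (c₃ - d) (q.1 - r.1) * pochZ (d - c₃) (q.2 - r.2) *
      ((pochZ (1 - d) (q.1 - r.1))⁻¹ * (pochZ (1 + d) (q.2 - r.2))⁻¹))) * sgn

/-- Off the diagonal the contributions of the first product and of the middle one cancel: by partial
fractions both are, up to sign, the sum over `q`, `r`, `t` of
`resW c₁ q * resW c₂ r * resW c₃ t / (d + r.1 + t.1 - q.1)`. -/
lemma coef_off_diag {c₁ c₂ c₃ d : ℂ} (hd : NonInt d) (h1 : NonInt (c₁ + d)) (h3 : NonInt (c₃ - d))
    (m n : ℕ) (hn : 1 ≤ n) :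
    c₁ / ((c₁ + d) * -d) * coefF c₁ c₂ c₃ d (m, n)
      + c₃ / ((c₃ - d) * d) * coefH c₁ c₂ c₃ d (m + n, m) = 0 := by
  have n0 := hd.ne_zero
  have n1 := h1.ne_zero
  have n3 := h3.ne_zero
  rw [coefF_eq hd h1, coefH_eq hd h3, sum_comm (s := antidiagonal (m + n)), mul_sum, mul_sum,
    ← sum_add_distrib]
  refine sum_eq_zero fun r _ => ?_
  have e1 : ∀ t : ℕ × ℕ, c₁ * ratG c₁ (m + n) (d + (r.1 + t.1))
      = ∑ q ∈ antidiagonal (m + n), resW c₁ q / (d + (r.1 + t.1) - q.1) := fun t =>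
    (sum_resW_div (by simpa using hd.add_int (r.1 + t.1))
      (by simpa [add_assoc] using h1.add_int_ne_zero (r.1 + t.1)) (by omega)).symm
  have e2 : ∀ q : ℕ × ℕ, c₃ * ratG c₃ n (-d + (q.1 - r.1))
      = ∑ t ∈ antidiagonal n, resW c₃ t / (-d + (q.1 - r.1) - t.1) := fun q =>
    (sum_resW_div (by simpa using hd.neg.add_int (q.1 - r.1))
      (by simpa [sub_eq_add_neg, add_assoc] using h3.add_int_ne_zero (q.1 - r.1)) hn).symm
  have e3 : ∑ t ∈ antidiagonal n, resW c₃ t * (c₁ * ratG c₁ (m + n) (d + (r.1 + t.1)))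
      + ∑ q ∈ antidiagonal (m + n), resW c₁ q * (c₃ * ratG c₃ n (-d + (q.1 - r.1))) = 0 := by
    simp_rw [e1, e2, mul_sum]
    rw [sum_comm, ← sum_add_distrib]
    refine sum_eq_zero fun q _ => ?_
    rw [← sum_add_distrib]
    refine sum_eq_zero fun t _ => ?_
    rw [show -d + ((q.1 : ℂ) - r.1) - t.1 = -(d + (r.1 + t.1) - q.1) by ring, div_neg]
    ring
  calc _ = -resW c₂ r * (∑ t ∈ antidiagonal n, resW c₃ t * (c₁ * ratG c₁ (m + n) (d + (r.1 + t.1)))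
      + ∑ q ∈ antidiagonal (m + n), resW c₁ q * (c₃ * ratG c₃ n (-d + (q.1 - r.1)))) := by
        rw [mul_add (-resW c₂ r), mul_sum, mul_sum, mul_sum, mul_sum]
        congr 1
        · refine sum_congr rfl fun t _ => ?_
          field_simp
        · refine sum_congr rfl fun q _ => ?_
          field_simp
    _ = 0 := by rw [e3, mul_zero]

/-- On the diagonal all three products contribute; the `ratG c₃ 0` of the middle one splits into two
simple fractions, which cancel the partial fractions of the other two. -/
lemma coef_diag {c₁ c₂ c₃ d : ℂ} (hd : NonInt d) (h1 : NonInt (c₁ + d)) (h3 : NonInt (c₃ - d))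
    (h2 : NonInt (c₂ + (c₃ - d))) (m : ℕ) (hm : 1 ≤ m) :
    c₁ / ((c₁ + d) * -d) * coefF c₁ c₂ c₃ d (m, 0)
      + c₃ / ((c₃ - d) * d) * coefH c₁ c₂ c₃ d (m, m)
      + c₂ / ((c₂ + (c₃ - d)) * -(c₃ - d)) * coefF c₂ c₁ c₃ (c₃ - d) (m, 0) = 0 := by
  have n0 := hd.ne_zero
  have n1 := h1.ne_zero
  have n3 := h3.ne_zero
  have n2 := h2.ne_zero
  have w0 : ∀ c, resW c (0, 0) = 1 := by simp [resW, pochN_zero]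
  have e0 := coefH_eq (c₁ := c₁) (c₂ := c₂) hd h3 m 0
  rw [add_zero] at e0
  rw [coefF_eq hd h1, e0, coefF_eq h3 h2]
  simp only [Nat.antidiagonal_zero, sum_singleton, w0, add_zero, Nat.cast_zero, mul_one]
  have e1 : ∀ r : ℕ × ℕ, c₁ * ratG c₁ m (d + r.1)
      = ∑ q ∈ antidiagonal m, resW c₁ q / (d + r.1 - q.1) := fun r =>
    (sum_resW_div (by simpa using hd.add_int r.1)
      (by simpa [add_assoc] using h1.add_int_ne_zero r.1) hm).symm
  have e2 : ∀ q : ℕ × ℕ, c₂ * ratG c₂ m (c₃ - d + q.1)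
      = ∑ r ∈ antidiagonal m, resW c₂ r / (c₃ - d + q.1 - r.1) := fun q =>
    (sum_resW_div (by simpa using h3.add_int q.1)
      (by simpa [add_assoc] using h2.add_int_ne_zero q.1) hm).symm
  have e3 : ∀ q r : ℕ × ℕ, c₃ * ratG c₃ 0 (-d + (q.1 - r.1))
      = -(1 / (d + r.1 - q.1)) - 1 / (c₃ - d + q.1 - r.1) := by
    intro q r
    have k1 : d + r.1 - q.1 ≠ 0 := by
      simpa [add_sub_assoc] using hd.add_int_ne_zero (r.1 - q.1)
    have k2 : c₃ - d + q.1 - r.1 ≠ 0 := by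
      simpa [add_sub_assoc] using h3.add_int_ne_zero (q.1 - r.1)
    rw [ratG, pochN_zero, pochN_zero, show -d + ((q.1 : ℂ) - r.1) = -(d + r.1 - q.1) by ring,
      show c₃ + -(d + (r.1 : ℂ) - q.1) = c₃ - d + q.1 - r.1 by ring]
    field_simp
    ring
  have e4 : ∑ r ∈ antidiagonal m, resW c₂ r * (c₁ * ratG c₁ m (d + r.1))
      + ∑ q ∈ antidiagonal m, ∑ r ∈ antidiagonal m,
        resW c₁ q * resW c₂ r * (c₃ * ratG c₃ 0 (-d + (q.1 - r.1)))
      + ∑ q ∈ antidiagonal m, resW c₁ q * (c₂ * ratG c₂ m (c₃ - d + q.1)) = 0 := by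
    simp_rw [e1, e2, e3, mul_sum]
    rw [sum_comm, ← sum_add_distrib, ← sum_add_distrib]
    refine sum_eq_zero fun q _ => ?_
    rw [← sum_add_distrib, ← sum_add_distrib]
    refine sum_eq_zero fun r _ => ?_
    ring
  rw [← neg_zero, ← e4, neg_add, neg_add]
  simp only [mul_sum, ← sum_neg_distrib]
  congr 1
  · congr 1
    · refine sum_congr rfl fun r _ => ?_
      field_simp
    · refine sum_congr rfl fun q _ => sum_congr rfl fun r _ => ?_
      field_simp
  · refine sum_congr rfl fun q _ => ?_
    field_simp

lemma coefF_zero (c₁ c₂ c₃ d : ℂ) : coefF c₁ c₂ c₃ d (0, 0) = 1 := by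
  simp [coefF, cauchy, appellF1Term, pochN_zero]

lemma coefH_zero {c₁ c₂ c₃ d : ℂ} (hd : NonInt d) (h3 : NonInt (c₃ - d)) :
    coefH c₁ c₂ c₃ d (0, 0) = 1 := by
  have : NonInt (d - c₃) := by simpa using h3.neg
  simp [coefH, cauchy, hornG2Term, pochN_zero, pochZ_zero hd, pochZ_zero h3, pochZ_zero hd.neg,
    pochZ_zero this]

/-- The coefficient of `z₁ ^ P.1 * z₅ ^ P.2` on the left-hand side of the quadratic relation. -/
lemma coef_total {c₁ c₂ c₃ d : ℂ} (hd : NonInt d) (h1 : NonInt (c₁ + d)) (h3 : NonInt (c₃ - d))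
    (h2 : NonInt (c₂ + (c₃ - d))) (P : ℕ × ℕ) :
    c₁ / ((c₁ + d) * -d) * (if P.2 ≤ P.1 then coefF c₁ c₂ c₃ d (P.2, P.1 - P.2) else 0)
      + c₃ / ((c₃ - d) * d) * coefH c₁ c₂ c₃ d P
      + c₂ / ((c₂ + (c₃ - d)) * -(c₃ - d)) *
        (if P.1 ≤ P.2 then coefF c₂ c₁ c₃ (c₃ - d) (P.1, P.2 - P.1) else 0)
      = if P = (0, 0) then (c₁ + c₂ + c₃) / ((c₁ + d) * (c₂ + (c₃ - d))) else 0 := by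
  obtain ⟨M, N⟩ := P
  rcases lt_trichotomy M N with h | rfl | h
  · obtain ⟨n, rfl⟩ := Nat.exists_eq_add_of_lt h
    have := coef_off_diag (c₁ := c₂) (c₂ := c₁) (c₃ := c₃) (d := c₃ - d) h3 h2
      (by rw [sub_sub_cancel]; exact hd) M (n + 1) (by omega)
    rw [coefH_swap]
    simp only [Prod.mk.injEq, show ¬ (M + n + 1 ≤ M) by omega, show M ≤ M + n + 1 by omega,
      show ¬ (M + n + 1 = 0) by omega, and_false, if_true, if_false,
      show M + n + 1 - M = n + 1 by omega]
    rw [sub_sub_cancel, ← add_assoc] at this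
    linear_combination this
  · simp only [le_refl, if_true, Nat.sub_self, Prod.mk.injEq, and_self]
    split_ifs with h0
    · subst h0
      rw [coefF_zero, coefF_zero, coefH_zero hd h3]
      have n0 := hd.ne_zero
      have n1 := h1.ne_zero
      have n3 := h3.ne_zero
      have n2 := h2.ne_zero
      field_simp
      ring
    · exact coef_diag hd h1 h3 h2 M (by omega)
  · obtain ⟨n, rfl⟩ := Nat.exists_eq_add_of_lt h
    have := coef_off_diag (c₂ := c₂) hd h1 h3 N (n + 1) (by omega)
    simp only [Prod.mk.injEq, show ¬ (N + n + 1 ≤ N) by omega, show N ≤ N + n + 1 by omega,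
      show ¬ (N + n + 1 = 0) by omega, false_and, if_true, if_false,
      show N + n + 1 - N = n + 1 by omega, mul_zero, add_zero]
    rw [← add_assoc] at this
    exact this

/-! ### Convergence near the origin -/

/-- At most geometric growth of a doubly indexed family. -/
def GeomBdd (f : ℕ × ℕ → ℂ) : Prop := ∃ R : ℝ, 1 ≤ R ∧ ∀ p, ‖f p‖ ≤ R ^ (p.1 + p.2)

lemma GeomBdd.mul {f g : ℕ × ℕ → ℂ} (hf : GeomBdd f) (hg : GeomBdd g) :
    GeomBdd (fun p => f p * g p) := by
  obtain ⟨R, hR, hf⟩ := hf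
  obtain ⟨S, hS, hg⟩ := hg
  refine ⟨R * S, by nlinarith, fun p => ?_⟩
  rw [norm_mul, mul_pow]
  exact mul_le_mul (hf p) (hg p) (norm_nonneg _) (by positivity)

lemma GeomBdd.of_comp {f : ℕ → ℂ} (hf : ∃ R : ℝ, 1 ≤ R ∧ ∀ n, ‖f n‖ ≤ R ^ n) {k : ℕ × ℕ → ℕ}
    (hk : ∀ p, k p ≤ p.1 + p.2) : GeomBdd (fun p => f (k p)) := by
  obtain ⟨R, hR, hf⟩ := hf
  exact ⟨R, hR, fun p => (hf _).trans (pow_le_pow_right₀ hR (hk p))⟩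

lemma pochN_growth (a : ℂ) : ∃ R : ℝ, 1 ≤ R ∧ ∀ n : ℕ, ‖pochN a n / n.factorial‖ ≤ R ^ n := by
  refine ⟨‖a‖ + 1, by linarith [norm_nonneg a], fun n => ?_⟩
  induction n with
  | zero => simp [pochN_zero]
  | succ n ih =>
    rw [pochN_succ, Nat.factorial_succ, Nat.cast_mul, mul_comm ((n + 1 : ℕ) : ℂ), mul_div_mul_comm,
      norm_mul, pow_succ]
    refine mul_le_mul ih ?_ (norm_nonneg _) (by positivity)
    rw [norm_div, Complex.norm_natCast, div_le_iff₀ (by positivity)]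
    refine (norm_add_le _ _).trans ?_
    rw [Complex.norm_natCast]
    push_cast
    nlinarith [norm_nonneg a, (Nat.cast_nonneg n : (0 : ℝ) ≤ n)]

lemma pochN_inv_growth {c : ℂ} (hc : NonInt c) :
    ∃ R : ℝ, 1 ≤ R ∧ ∀ n : ℕ, ‖n.factorial / pochN c n‖ ≤ R ^ n := by
  -- A non-integer has positive distance `η` to `ℤ`, so `k + 1 ≤ R * ‖c + k‖` uniformly in `k`.
  have hcl : IsClosed (Set.range ((↑) : ℤ → ℂ)) := Complex.isClosedEmbedding_intCast.isClosed_range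
  obtain ⟨η, hη, hball⟩ := Metric.isOpen_iff.1 hcl.isOpen_compl c
    (by rintro ⟨m, hm⟩; exact hc m hm.symm)
  have hk : ∀ k : ℕ, η ≤ ‖c + k‖ := by
    intro k
    by_contra! hlt
    refine hball (a := ((-k : ℤ) : ℂ)) ?_ ⟨-k, rfl⟩
    rw [Metric.mem_ball', dist_eq_norm]
    simpa using hlt
  refine ⟨1 + (‖c‖ + 1) / η, le_add_of_nonneg_right (by positivity), fun n => ?_⟩
  induction n with
  | zero => simp [pochN_zero]
  | succ n ih =>
    have h0 : 0 < ‖c + n‖ := hη.trans_le (hk n)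
    rw [pochN_succ, Nat.factorial_succ, Nat.cast_mul, mul_comm ((n + 1 : ℕ) : ℂ), mul_div_mul_comm,
      norm_mul, pow_succ]
    refine mul_le_mul ih ?_ (norm_nonneg _) (by positivity)
    rw [norm_div, Complex.norm_natCast, div_le_iff₀ h0]
    have h1 : (n : ℝ) ≤ ‖c + n‖ + ‖c‖ := by
      have := norm_sub_le (c + n) c
      rwa [add_sub_cancel_left, Complex.norm_natCast] at this
    have h2 : ‖c‖ + 1 ≤ (‖c‖ + 1) / η * ‖c + n‖ := by
      rw [div_mul_eq_mul_div, le_div_iff₀ hη]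
      exact mul_le_mul_of_nonneg_left (hk n) (by positivity)
    push_cast
    linarith

lemma GeomBdd.appellF1 (a b b' : ℂ) {c : ℂ} (hc : NonInt c) :
    GeomBdd (appellF1Term a b b' c 1 1) := by
  have h := (((GeomBdd.of_comp (pochN_growth a) (k := fun p => p.1 + p.2) (fun p => le_rfl)).mul
    (GeomBdd.of_comp (pochN_inv_growth hc) (k := fun p => p.1 + p.2) (fun p => le_rfl))).mul
    (GeomBdd.of_comp (pochN_growth b) (k := fun p => p.1) (fun p => by omega))).mul
    (GeomBdd.of_comp (pochN_growth b') (k := fun p => p.2) (fun p => by omega))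
  convert h using 2 with p
  have := pochN_ne_zero hc (p.1 + p.2)
  have f1 : ((p.1 + p.2).factorial : ℂ) ≠ 0 := by exact_mod_cast Nat.factorial_ne_zero _
  simp only [appellF1Term, one_pow, mul_one]
  field_simp

lemma pochZ_growth {b b' : ℂ} (hb : NonInt b) (hb' : NonInt b') :
    ∃ R : ℝ, 1 ≤ R ∧ ∀ k : ℕ, ‖pochZ b k * pochZ b' (-k)‖ ≤ R ^ k := by
  obtain ⟨R, hR, h⟩ := pochN_growth b
  obtain ⟨S, hS, h'⟩ := pochN_inv_growth hb'.one_sub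
  refine ⟨R * S, by nlinarith, fun k => ?_⟩
  have r := pochZ_reflect hb' k
  rw [pochZ_natCast hb'.one_sub, ← eq_div_iff (pochN_ne_zero hb'.one_sub k)] at r
  have f1 : (k.factorial : ℂ) ≠ 0 := by exact_mod_cast Nat.factorial_ne_zero _
  have e : pochZ b k * pochZ b' (-k)
      = (-1) ^ k * ((pochN b k / k.factorial) * (k.factorial / pochN (1 - b') k)) := by
    rw [pochZ_natCast hb, r, zpow_natCast]
    field_simp
  rw [e, norm_mul, norm_mul, mul_pow]
  simpa using mul_le_mul (h k) (h' k) (norm_nonneg _) (by positivity)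

lemma GeomBdd.hornG2 (a a' : ℂ) {b b' : ℂ} (hb : NonInt b) (hb' : NonInt b') :
    GeomBdd (hornG2Term a a' b b' (-1) (-1)) := by
  have h1 : GeomBdd (fun p => pochZ b ((p.2 : ℤ) - p.1) * pochZ b' ((p.1 : ℤ) - p.2)) := by
    obtain ⟨R, hR, h⟩ := pochZ_growth hb hb'
    obtain ⟨S, hS, h'⟩ := pochZ_growth hb' hb
    refine ⟨R * S, by nlinarith, fun p => ?_⟩
    rw [mul_pow]
    have hR' : 1 ≤ R ^ (p.1 + p.2) := one_le_pow₀ hR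
    have hS' : 1 ≤ S ^ (p.1 + p.2) := one_le_pow₀ hS
    rcases le_total p.1 p.2 with hp | hp
    · obtain ⟨k, hk⟩ := Nat.exists_eq_add_of_le hp
      have := h k
      show ‖pochZ b ((p.2 : ℤ) - p.1) * pochZ b' ((p.1 : ℤ) - p.2)‖ ≤ _
      rw [show ((p.2 : ℤ) - p.1) = k by omega, show ((p.1 : ℤ) - p.2) = -k by omega]
      have h2 : R ^ k ≤ R ^ (p.1 + p.2) := pow_le_pow_right₀ hR (by omega)
      nlinarith
    · obtain ⟨k, hk⟩ := Nat.exists_eq_add_of_le hp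
      have := h' k
      show ‖pochZ b ((p.2 : ℤ) - p.1) * pochZ b' ((p.1 : ℤ) - p.2)‖ ≤ _
      rw [show ((p.2 : ℤ) - p.1) = -k by omega, show ((p.1 : ℤ) - p.2) = k by omega, mul_comm]
      have h2 : S ^ k ≤ S ^ (p.1 + p.2) := pow_le_pow_right₀ hS (by omega)
      nlinarith
  have hs : GeomBdd (fun p => (-1) ^ (p.1 + p.2)) := ⟨1, le_rfl, fun p => by simp⟩
  have h := ((h1.mul hs).mul
    (GeomBdd.of_comp (pochN_growth a) (k := fun p => p.1) (fun p => by omega))).mul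
    (GeomBdd.of_comp (pochN_growth a') (k := fun p => p.2) (fun p => by omega))
  convert h using 2 with p
  simp only [hornG2Term, pow_add]
  field_simp

lemma GeomBdd.summable {f : ℕ × ℕ → ℂ} (hf : GeomBdd f) : ∃ ε : ℝ, 0 < ε ∧ ∀ x y : ℂ,
    ‖x‖ < ε → ‖y‖ < ε → Summable fun p : ℕ × ℕ => ‖f p * x ^ p.1 * y ^ p.2‖ := by
  obtain ⟨R, hR, hf⟩ := hf
  have hR0 : 0 < R := by linarith
  refine ⟨R⁻¹, by positivity, fun x y hx hy => ?_⟩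
  have key : ∀ z : ℂ, ‖z‖ < R⁻¹ → Summable fun n : ℕ => (R * ‖z‖) ^ n := fun z hz =>
    summable_geometric_of_lt_one (by positivity)
      (by have := mul_lt_mul_of_pos_left hz hR0; rwa [mul_inv_cancel₀ hR0.ne'] at this)
  refine ((key x hx).mul_of_nonneg (key y hy) (fun n => by positivity)
    (fun n => by positivity)).of_nonneg_of_le (fun _ => norm_nonneg _) fun p => ?_
  rw [norm_mul, norm_mul, norm_pow, norm_pow, mul_pow, mul_pow]
  calc _ ≤ R ^ (p.1 + p.2) * ‖x‖ ^ p.1 * ‖y‖ ^ p.2 := by gcongr; exact hf p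
    _ = _ := by rw [pow_add]; ring

/-! ### Products and rearrangements of double series -/

/-- Componentwise antidiagonals of `ℕ × ℕ`. -/
instance : HasAntidiagonal (ℕ × ℕ) where
  antidiagonal p := (HasAntidiagonal.antidiagonal p.1 ×ˢ HasAntidiagonal.antidiagonal p.2).map
    (Equiv.prodProdProdComm ℕ ℕ ℕ ℕ).toEmbedding
  mem_antidiagonal {p q} := by
    obtain ⟨⟨a, b⟩, ⟨c, e⟩⟩ := q
    obtain ⟨m, n⟩ := p
    simp only [mem_map_equiv, mem_product, HasAntidiagonal.mem_antidiagonal,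
      Equiv.prodProdProdComm_symm, Equiv.prodProdProdComm_apply, Prod.mk_add_mk, Prod.mk.injEq]

lemma antidiagonal_prod (p : ℕ × ℕ) : HasAntidiagonal.antidiagonal p =
    (HasAntidiagonal.antidiagonal p.1 ×ˢ HasAntidiagonal.antidiagonal p.2).map
      (Equiv.prodProdProdComm ℕ ℕ ℕ ℕ).toEmbedding := rfl

lemma hasSum_antidiagonal {F G : ℕ × ℕ → ℂ} (hf : Summable fun p => ‖F p‖)
    (hg : Summable fun p => ‖G p‖) :
    HasSum (fun p => ∑ kl ∈ HasAntidiagonal.antidiagonal p, F kl.1 * G kl.2)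
      ((∑' p, F p) * ∑' p, G p) := by
  have hfg := summable_mul_of_summable_norm hf hg
  rw [hf.of_norm.tsum_mul_tsum_eq_tsum_sum_antidiagonal hg.of_norm hfg]
  exact (summable_sum_mul_antidiagonal_of_summable_mul hfg).hasSum

lemma sum_antidiagonal_eq_cauchy (f g : ℕ × ℕ → ℂ) (x y : ℂ) (p : ℕ × ℕ) :
    ∑ kl ∈ HasAntidiagonal.antidiagonal p,
      (f kl.1 * x ^ kl.1.1 * y ^ kl.1.2) * (g kl.2 * x ^ kl.2.1 * y ^ kl.2.2)
      = cauchy f g p * x ^ p.1 * y ^ p.2 := by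
  rw [antidiagonal_prod, sum_map, sum_product, cauchy, sum_mul, sum_mul]
  refine sum_congr rfl fun r hr => ?_
  rw [sum_mul, sum_mul]
  refine sum_congr rfl fun t ht => ?_
  rw [HasAntidiagonal.mem_antidiagonal] at hr ht
  simp only [Equiv.coe_toEmbedding, Equiv.prodProdProdComm_apply]
  rw [← hr, ← ht, pow_add, pow_add]
  ring

lemma hasSum_cauchy {f g F G : ℕ × ℕ → ℂ} {x y : ℂ} (hF : ∀ p, F p = f p * x ^ p.1 * y ^ p.2)
    (hG : ∀ p, G p = g p * x ^ p.1 * y ^ p.2) (hf : Summable fun p => ‖F p‖)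
    (hg : Summable fun p => ‖G p‖) :
    HasSum (fun p : ℕ × ℕ => cauchy f g p * x ^ p.1 * y ^ p.2) ((∑' p, F p) * ∑' p, G p) := by
  have h := hasSum_antidiagonal hf hg
  simp only [hF, hG, sum_antidiagonal_eq_cauchy] at h ⊢
  exact h

/-- Collecting a double series in `xy` and `x` by powers of `x` and `y`. -/
lemma hasSum_reindex {f : ℕ × ℕ → ℂ} {x y S : ℂ}
    (h : HasSum (fun p : ℕ × ℕ => f p * (x * y) ^ p.1 * x ^ p.2) S) :
    HasSum (fun P : ℕ × ℕ => (if P.2 ≤ P.1 then f (P.2, P.1 - P.2) else 0) * x ^ P.1 * y ^ P.2)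
      S := by
  have hg : Function.Injective (fun p : ℕ × ℕ => (p.1 + p.2, p.1)) := by
    rintro ⟨a, b⟩ ⟨a', b'⟩ h
    simp only [Prod.mk.injEq] at h ⊢
    omega
  rw [← hg.hasSum_iff]
  · convert h using 2 with p
    simp only [Function.comp, le_add_iff_nonneg_right, zero_le, if_true, Nat.add_sub_cancel_left,
      mul_pow, pow_add]
    ring
  · rintro ⟨M, N⟩ hP
    rw [if_neg, zero_mul, zero_mul]
    intro hle
    exact hP ⟨(N, M - N), by simp only [Prod.mk.injEq, and_true] at hle ⊢; omega⟩

lemma appellF1Term_eq (a b b' c x y : ℂ) (p : ℕ × ℕ) :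
    appellF1Term a b b' c x y p = appellF1Term a b b' c 1 1 p * x ^ p.1 * y ^ p.2 := by
  simp [appellF1Term]

lemma hornG2Term_eq (a a' b b' x y : ℂ) (p : ℕ × ℕ) :
    hornG2Term a a' b b' (-x) (-y) p = hornG2Term a a' b b' (-1) (-1) p * x ^ p.1 * y ^ p.2 := by
  simp only [hornG2Term]
  rw [neg_pow x, neg_pow y]
  ring

/-! ### The quadratic relation -/

/-- The quadratic relation in the parameter `d = c₄ - c₁`, at a point where all six series converge
absolutely. -/
lemma quadratic_relation_of_summable {c₁ c₂ c₃ d z w : ℂ} (hd : NonInt d) (h1 : NonInt (c₁ + d))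
    (h3 : NonInt (c₃ - d)) (h2 : NonInt (c₂ + (c₃ - d)))
    (s1 : Summable fun p => ‖appellF1Term (c₁ + d) c₂ c₃ (1 + d) (z * w) z p‖)
    (s2 : Summable fun p => ‖appellF1Term (-c₁ - d) (-c₂) (-c₃) (1 - d) (z * w) z p‖)
    (s3 : Summable fun p => ‖hornG2Term c₁ c₂ d (c₃ - d) (-z) (-w) p‖)
    (s4 : Summable fun p => ‖hornG2Term (-c₁) (-c₂) (-d) (d - c₃) (-z) (-w) p‖)
    (s5 : Summable fun p => ‖appellF1Term (c₂ + (c₃ - d)) c₁ c₃ (1 + (c₃ - d)) (z * w) w p‖)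
    (s6 : Summable fun p =>
      ‖appellF1Term (-c₂ - (c₃ - d)) (-c₁) (-c₃) (1 - (c₃ - d)) (z * w) w p‖) :
    c₁ / ((c₁ + d) * -d) * appellF1 (c₁ + d) c₂ c₃ (1 + d) (z * w) z *
          appellF1 (-c₁ - d) (-c₂) (-c₃) (1 - d) (z * w) z
      + c₃ / ((c₃ - d) * d) * hornG2 c₁ c₂ d (c₃ - d) (-z) (-w) *
          hornG2 (-c₁) (-c₂) (-d) (d - c₃) (-z) (-w)
      + c₂ / ((c₂ + (c₃ - d)) * (d - c₃)) *
          appellF1 (c₂ + (c₃ - d)) c₁ c₃ (1 + (c₃ - d)) (z * w) w *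
          appellF1 (-c₂ - (c₃ - d)) (-c₁) (-c₃) (1 - (c₃ - d)) (z * w) w
      = (c₁ + c₂ + c₃) / ((c₁ + d) * (c₂ + (c₃ - d))) := by
  have A := hasSum_reindex
    (hasSum_cauchy (appellF1Term_eq _ _ _ _ _ _) (appellF1Term_eq _ _ _ _ _ _) s1 s2)
  have B := hasSum_cauchy (hornG2Term_eq _ _ _ _ _ _) (hornG2Term_eq _ _ _ _ _ _) s3 s4
  have C := hasSum_cauchy (appellF1Term_eq _ _ _ _ _ _) (appellF1Term_eq _ _ _ _ _ _) s5 s6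
  simp only [mul_comm z w] at C
  replace C := (Equiv.prodComm ℕ ℕ).hasSum_iff.2 (hasSum_reindex C)
  have T := ((A.mul_left (c₁ / ((c₁ + d) * -d))).add (B.mul_left (c₃ / ((c₃ - d) * d)))).add
    (C.mul_left (c₂ / ((c₂ + (c₃ - d)) * -(c₃ - d))))
  have U := hasSum_ite_eq ((0, 0) : ℕ × ℕ) ((c₁ + c₂ + c₃) / ((c₁ + d) * (c₂ + (c₃ - d))))
  refine Eq.trans ?_ (T.unique (Eq.mp (congrArg (HasSum · _) (funext fun P => ?_)) U))
  · simp only [appellF1, hornG2, ← neg_sub c₃ d, mul_comm z w, mul_assoc]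
  · have key := coef_total hd h1 h3 h2 P
    have hP : (if P = (0, 0) then (c₁ + c₂ + c₃) / ((c₁ + d) * (c₂ + (c₃ - d))) else 0)
        = (if P = (0, 0) then (c₁ + c₂ + c₃) / ((c₁ + d) * (c₂ + (c₃ - d))) else 0)
          * z ^ P.1 * w ^ P.2 := by
      split_ifs with h
      · simp [h]
      · simp
    rw [hP, ← key]
    simp only [coefF, coefH, Function.comp, Equiv.prodComm_apply, Prod.fst_swap, Prod.snd_swap]
    ring_nf

/-- Quadratic relation for Appell's `F₁` and Horn's `G₂` hypergeometric series. -/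
theorem appellF1_quadratic_relation (c₁ c₂ c₃ c₄ : ℂ)
    (h1 : ∀ m : ℤ, c₁ ≠ (m : ℂ)) (h2 : ∀ m : ℤ, c₂ ≠ (m : ℂ))
    (h3 : ∀ m : ℤ, c₃ ≠ (m : ℂ)) (h4 : ∀ m : ℤ, c₄ ≠ (m : ℂ))
    (h5 : ∀ m : ℤ, c₄ - c₁ ≠ (m : ℂ)) (h6 : ∀ m : ℤ, c₄ - c₁ - c₃ ≠ (m : ℂ))
    (h7 : ∀ m : ℤ, c₄ - c₁ - c₂ - c₃ ≠ (m : ℂ)) :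
    ∃ ε : ℝ, 0 < ε ∧ ∀ z₁ z₅ : ℂ, ‖z₁‖ < ε → ‖z₅‖ < ε →
      (Summable fun p : ℕ × ℕ => ‖appellF1Term c₄ c₂ c₃ (1 + c₄ - c₁) (z₁ * z₅) z₁ p‖) ∧
      (Summable fun p : ℕ × ℕ => ‖appellF1Term (-c₄) (-c₂) (-c₃) (1 - c₄ + c₁) (z₁ * z₅) z₁ p‖) ∧
      (Summable fun p : ℕ × ℕ => ‖hornG2Term c₁ c₂ (c₄ - c₁) (c₁ + c₃ - c₄) (-z₁) (-z₅) p‖) ∧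
      (Summable fun p : ℕ × ℕ =>
        ‖hornG2Term (-c₁) (-c₂) (c₁ - c₄) (c₄ - c₁ - c₃) (-z₁) (-z₅) p‖) ∧
      (Summable fun p : ℕ × ℕ =>
        ‖appellF1Term (c₁ + c₂ + c₃ - c₄) c₁ c₃ (1 + c₁ + c₃ - c₄) (z₁ * z₅) z₅ p‖) ∧
      (Summable fun p : ℕ × ℕ =>
        ‖appellF1Term (c₄ - c₁ - c₂ - c₃) (-c₁) (-c₃) (1 + c₄ - c₁ - c₃) (z₁ * z₅) z₅ p‖) ∧
      c₁ / (c₄ * (c₁ - c₄)) *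
          appellF1 c₄ c₂ c₃ (1 + c₄ - c₁) (z₁ * z₅) z₁ *
          appellF1 (-c₄) (-c₂) (-c₃) (1 - c₄ + c₁) (z₁ * z₅) z₁
        + c₃ / ((c₁ + c₃ - c₄) * (c₄ - c₁)) *
          hornG2 c₁ c₂ (c₄ - c₁) (c₁ + c₃ - c₄) (-z₁) (-z₅) *
          hornG2 (-c₁) (-c₂) (c₁ - c₄) (c₄ - c₁ - c₃) (-z₁) (-z₅)
        + c₂ / ((c₁ + c₂ + c₃ - c₄) * (c₄ - c₁ - c₃)) *
          appellF1 (c₁ + c₂ + c₃ - c₄) c₁ c₃ (1 + c₁ + c₃ - c₄) (z₁ * z₅) z₅ *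
          appellF1 (c₄ - c₁ - c₂ - c₃) (-c₁) (-c₃) (1 + c₄ - c₁ - c₃) (z₁ * z₅) z₅
        = (c₁ + c₂ + c₃) / (c₄ * (c₁ + c₂ + c₃ - c₄)) := by
  obtain ⟨d, rfl⟩ : ∃ d, c₄ = c₁ + d := ⟨c₄ - c₁, by ring⟩
  have e1 : 1 + (c₁ + d) - c₁ = 1 + d := by ring
  have e2 : -(c₁ + d) = -c₁ - d := by ring
  have e3 : 1 - (c₁ + d) + c₁ = 1 - d := by ring
  have e4 : c₁ + d - c₁ = d := by ring
  have e5 : c₁ + c₃ - (c₁ + d) = c₃ - d := by ring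
  have e6 : c₁ - (c₁ + d) = -d := by ring
  have e7 : c₁ + c₂ + c₃ - (c₁ + d) = c₂ + (c₃ - d) := by ring
  have e8 : 1 + c₁ + c₃ - (c₁ + d) = 1 + (c₃ - d) := by ring
  have e9 : d - c₂ - c₃ = -c₂ - (c₃ - d) := by ring
  have e10 : 1 + d - c₃ = 1 - (c₃ - d) := by ring
  simp only [e1, e2, e3, e4, e5, e6, e7, e8, e9, e10] at *
  have hd : NonInt d := h5
  have k1 : NonInt (c₁ + d) := h4
  have k3 : NonInt (c₃ - d) := by simpa using NonInt.neg (x := d - c₃) h6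
  have k3' : NonInt (d - c₃) := h6
  have k2 : NonInt (c₂ + (c₃ - d)) := by
    simpa [add_comm] using NonInt.neg (x := -c₂ - (c₃ - d)) h7
  obtain ⟨ε₁, p₁, t₁⟩ := (GeomBdd.appellF1 (c₁ + d) c₂ c₃ hd.one_add).summable
  obtain ⟨ε₂, p₂, t₂⟩ := (GeomBdd.appellF1 (-c₁ - d) (-c₂) (-c₃) hd.one_sub).summable
  obtain ⟨ε₃, p₃, t₃⟩ := (GeomBdd.hornG2 c₁ c₂ hd k3).summable
  obtain ⟨ε₄, p₄, t₄⟩ := (GeomBdd.hornG2 (-c₁) (-c₂) hd.neg k3').summable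
  obtain ⟨ε₅, p₅, t₅⟩ := (GeomBdd.appellF1 (c₂ + (c₃ - d)) c₁ c₃ k3.one_add).summable
  obtain ⟨ε₆, p₆, t₆⟩ := (GeomBdd.appellF1 (-c₂ - (c₃ - d)) (-c₁) (-c₃) k3.one_sub).summable
  simp only [← appellF1Term_eq, ← hornG2Term_eq] at t₁ t₂ t₃ t₄ t₅ t₆
  -- The bound `1` gives `‖z₁ * z₅‖ < ε` as well.
  obtain ⟨ε, hε, l₀, l₁, l₂, l₃, l₄, l₅, l₆⟩ : ∃ ε : ℝ, 0 < ε ∧ ε ≤ 1 ∧ ε ≤ ε₁ ∧ ε ≤ ε₂ ∧ ε ≤ ε₃ ∧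
      ε ≤ ε₄ ∧ ε ≤ ε₅ ∧ ε ≤ ε₆ :=
    ⟨min 1 (min ε₁ (min ε₂ (min ε₃ (min ε₄ (min ε₅ ε₆))))), by positivity, by simp⟩
  refine ⟨ε, hε, fun z w hz hw => ?_⟩
  have hzw : ‖z * w‖ < ε := by
    rw [norm_mul]
    nlinarith [norm_nonneg z, norm_nonneg w]
  have s1 := t₁ (z * w) z (by linarith) (by linarith)
  have s2 := t₂ (z * w) z (by linarith) (by linarith)
  have s3 := t₃ z w (by linarith) (by linarith)
  have s4 := t₄ z w (by linarith) (by linarith)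
  have s5 := t₅ (z * w) w (by linarith) (by linarith)
  have s6 := t₆ (z * w) w (by linarith) (by linarith)
  exact ⟨s1, s2, s3, s4, s5, s6,
    quadratic_relation_of_summable hd k1 k3 k2 s1 s2 s3 s4 s5 s6⟩
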